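/- Let H be a simple connected plane graph. Then there exists a simple plane graph H_Δ and an injection τ : V(H) → V(H_Δ) such that: (1) H_Δ is 3-connected and triangulated; (2) H is a subgraph of H_Δ via τ; (3) for every x, y ∈ V(H), wbw_{H_Δ}(τ(x), τ(y)) ≤ 4 · wbw_H(x, y); (4) every vertex of H_Δ is within wall-by-wall distance at most 4 from some vertex of τ(V(H)); and (5) for every non-negative integer λ, H^λ is a subgraph of H_Δ^{4λ}. -/

import Mathlib

/-!
Definitions for wall-by-wall distance, λ-flat graphs and ξ-nearly planar graphs,
following Grigoriev, Koutsonas and Thilikos, "Nearly Planar Graphs and λ-flat Graphs".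

A plane graph is modelled combinatorially as a simple graph equipped with a rotation
system (a cyclic order of the edges incident to each vertex) that is planar, i.e.
satisfies Euler's formula (with faces counted as orbits of the face-tracing successor
on darts, corrected for isolated vertices and the number of connected components).

A graph embedding in the sphere (where edges may cross, but only at points that are
not vertices) is modelled topologically by a `Drawing`: an injective placement of the
vertices on the unit sphere of `ℝ³` together with, for each edge, a simple arc joining
the images of its endpoints whose interior avoids all vertices.
-/

namespace WBW

/-- The set of edges of `G` incident to the vertex `v`. -/
def incidentSet {V : Type*} (G : SimpleGraph V) (v : V) : Set (Sym2 V) :=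
  {e | e ∈ G.edgeSet ∧ v ∈ e}

/-- A simple graph together with a rotation system: for every vertex `v`, a
permutation of `Sym2 V` which fixes every non-incident edge and is a single cycle on
the set of edges incident to `v` (the cyclic order `σ_v` of the drawing). -/
structure RotationSystem (V : Type*) where
  G : SimpleGraph V
  rot : V → Equiv.Perm (Sym2 V)
  rot_cycleOn : ∀ v, (rot v).IsCycleOn (incidentSet G v)
  rot_fixed : ∀ v, ∀ e ∉ incidentSet G v, rot v e = e

variable {V : Type*}

/-- The face-tracing successor on darts: the dart `(u,v)` is followed by the dart
leaving `v` along the edge succeeding `s(u,v)` in the cyclic order around `v`. -/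
noncomputable def RotationSystem.faceNext (R : RotationSystem V) (d : R.G.Dart) :
    R.G.Dart :=
  have hmem : d.edge ∈ incidentSet R.G d.toProd.2 :=
    ⟨d.edge_mem, by rcases d with ⟨⟨a, b⟩, h⟩; simp [SimpleGraph.Dart.edge]⟩
  have hmem' : R.rot d.toProd.2 d.edge ∈ incidentSet R.G d.toProd.2 :=
    (R.rot_cycleOn d.toProd.2).1.mapsTo hmem
  ⟨(d.toProd.2, Sym2.Mem.other hmem'.2), by
    have h := Sym2.other_spec hmem'.2
    have h2 : R.rot d.toProd.2 d.edge ∈ R.G.edgeSet := hmem'.1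
    rw [← h] at h2
    exact h2⟩

/-- The number of faces of a rotation system: the number of orbits of the
face-tracing successor on darts. -/
noncomputable def RotationSystem.numFaces (R : RotationSystem V) : ℕ :=
  Nat.card (Quot (fun a b : R.G.Dart => R.faceNext a = b))

/-- A rotation system is plane (it is an embedding of the graph in the sphere without
crossings) iff it satisfies Euler's formula, componentwise; isolated vertices are
accounted for separately, since they carry no dart. -/
def RotationSystem.IsPlane (R : RotationSystem V) : Prop :=
  Nat.card V + R.numFaces + Nat.card {v : V | ∀ w, ¬ R.G.Adj v w} =
    Nat.card R.G.edgeSet + 2 * Nat.card R.G.ConnectedComponent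

/-- Two edges are attached if they share a vertex `v` and appear consecutively in the
cyclic order `σ_v` or its inverse. -/
def Attached (R : RotationSystem V) (e e' : Sym2 V) : Prop :=
  ∃ v : V, e ∈ incidentSet R.G v ∧ e' ∈ incidentSet R.G v ∧
    (R.rot v e = e' ∨ R.rot v e' = e)

/-- A wall-by-wall walk: a nonempty sequence of distinct edges of `R.G` in which
every two consecutive edges are attached. -/
def IsWbwWalk (R : RotationSystem V) (L : List (Sym2 V)) : Prop :=
  L ≠ [] ∧ L.Nodup ∧ (∀ e ∈ L, e ∈ R.G.edgeSet) ∧ L.Chain' (Attached R)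

/-- An `(x,y)`-wall-by-wall walk: a wall-by-wall walk whose first edge is incident to
`x` and whose last edge is incident to `y`. -/
def IsWbwWalkFromTo (R : RotationSystem V) (x y : V) (L : List (Sym2 V)) : Prop :=
  IsWbwWalk R L ∧ (∃ e, L.head? = some e ∧ x ∈ e) ∧ (∃ e, L.getLast? = some e ∧ y ∈ e)

/-- The wall-by-wall distance between `x` and `y`: the least number of edges of an
`(x,y)`-wall-by-wall walk (`⊤` if there is no such walk). -/
noncomputable def wbwDist (R : RotationSystem V) (x y : V) : ℕ∞ :=
  sInf {n : ℕ∞ | ∃ L, IsWbwWalkFromTo R x y L ∧ (L.length : ℕ∞) = n}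

/-- The `λ`-power of a plane graph: keep all edges and make adjacent all pairs of
vertices at wall-by-wall distance at most `λ`. -/
def RotationSystem.power (R : RotationSystem V) (l : ℕ) : SimpleGraph V :=
  R.G ⊔ SimpleGraph.fromRel (fun x y => wbwDist R x y ≤ (l : ℕ∞))

/-- `H` is a subgraph of `G` via the injection `τ`. -/
def SubgraphVia {U V : Type*} (H : SimpleGraph U) (G : SimpleGraph V) (τ : U → V) :
    Prop :=
  Function.Injective τ ∧ ∀ x y, H.Adj x y → G.Adj (τ x) (τ y)

/-- A graph is `λ`-flat if it is a subgraph of the `λ`-power of some plane graph. -/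
def IsFlat (l : ℕ) {V : Type*} (G : SimpleGraph V) : Prop :=
  ∃ (W : Type) (_ : Finite W) (R : RotationSystem W) (τ : V → W),
    R.IsPlane ∧ SubgraphVia G (R.power l) τ

/-- The unit sphere in `ℝ³`. -/
def unitSphere : Set (EuclideanSpace ℝ (Fin 3)) := Metric.sphere 0 1

/-- A drawing (embedding) of a graph in the sphere: vertices are placed injectively,
every edge is drawn as a simple arc joining the images of its two endpoints, and the
interior of every arc avoids all vertex images (so edges may meet, away from their
endpoints, only at points that are not vertices). -/
structure Drawing {V : Type*} (G : SimpleGraph V) where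
  vmap : V → unitSphere
  vmap_inj : Function.Injective vmap
  arc : Sym2 V → C(Set.Icc (0 : ℝ) 1, unitSphere)
  arc_inj : ∀ e ∈ G.edgeSet, Function.Injective (arc e)
  arc_ends : ∀ e ∈ G.edgeSet,
    Sym2.map vmap e =
      s(arc e ⟨0, Set.mem_Icc.mpr (by norm_num)⟩, arc e ⟨1, Set.mem_Icc.mpr (by norm_num)⟩)
  interior_avoids : ∀ e ∈ G.edgeSet, ∀ t : Set.Icc (0 : ℝ) 1,
    (t : ℝ) ≠ 0 → (t : ℝ) ≠ 1 → arc e t ∉ Set.range vmap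

/-- The crossings of the edge `e` in a drawing: pairs consisting of another edge `e'`
and a point, not a vertex, lying on the arcs of both `e` and `e'`. -/
def crossingSet {V : Type*} {G : SimpleGraph V} (D : Drawing G) (e : Sym2 V) :
    Set (Sym2 V × unitSphere) :=
  {q | q.1 ∈ G.edgeSet ∧ q.1 ≠ e ∧ q.2 ∈ Set.range (D.arc e) ∧
    q.2 ∈ Set.range (D.arc q.1) ∧ q.2 ∉ Set.range D.vmap}

/-- A graph is `ξ`-nearly planar if it has a drawing in the sphere in which every
edge is crossed at most `ξ` times. -/
def IsNearlyPlanar (x : ℕ) {V : Type*} (G : SimpleGraph V) : Prop :=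
  ∃ D : Drawing G, ∀ e ∈ G.edgeSet,
    (crossingSet D e).Finite ∧ (crossingSet D e).ncard ≤ x

/-- `λ(G)`: the least `λ` for which `G` is `λ`-flat. -/
noncomputable def flatNum {V : Type*} (G : SimpleGraph V) : ℕ :=
  sInf {l | IsFlat l G}

/-- `ξ(G)`: the least `ξ` for which `G` is `ξ`-nearly planar. -/
noncomputable def nearNum {V : Type*} (G : SimpleGraph V) : ℕ :=
  sInf {x | IsNearlyPlanar x G}

/-- A graph is 3-connected if it has more than 3 vertices and removing any at most 2
vertices leaves it connected. -/
def ThreeConnected {V : Type*} (G : SimpleGraph V) : Prop :=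
  3 < Nat.card V ∧ ∀ s : Set V, s.ncard ≤ 2 → (G.induce sᶜ).Connected

/-- A plane graph is triangulated if every face is bounded by a triangle, i.e. every
orbit of the face-tracing successor has length exactly 3. -/
def RotationSystem.Triangulated (R : RotationSystem V) : Prop :=
  ∀ d : R.G.Dart, R.faceNext (R.faceNext (R.faceNext d)) = d ∧ R.faceNext d ≠ d

/-- `H` is a topological minor of `G`: some subdivision of `H` is a subgraph of `G`,
equivalently the branch vertices embed injectively into `G` and the edges of `H` are
realized by internally disjoint paths of `G` avoiding the branch vertices. -/
def IsTopMinor {U V : Type*} (H : SimpleGraph U) (G : SimpleGraph V) : Prop :=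
  ∃ τ : U → V, Function.Injective τ ∧
    ∃ P : ∀ ⦃x y : U⦄, H.Adj x y → G.Walk (τ x) (τ y),
      (∀ ⦃x y : U⦄ (h : H.Adj x y), (P h).IsPath) ∧
      (∀ ⦃x y : U⦄ (h : H.Adj x y), ∀ v ∈ (P h).support,
        v ∈ Set.range τ → v = τ x ∨ v = τ y) ∧
      (∀ ⦃x y x' y' : U⦄ (h : H.Adj x y) (h' : H.Adj x' y'), s(x, y) ≠ s(x', y') →
        ∀ v, v ∈ (P h).support → v ∈ (P h').support → v ∈ Set.range τ)

/-- `H` is a contraction of `G`: `H` is obtained from `G` by contracting edges,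
equivalently there is a surjection `V(G) → V(H)` with connected fibres such that the
edges of `H` are exactly the pairs of distinct fibres joined by an edge of `G`. -/
def IsContractionOf {U V : Type*} (H : SimpleGraph U) (G : SimpleGraph V) : Prop :=
  ∃ f : V → U, Function.Surjective f ∧
    (∀ u : U, (G.induce (f ⁻¹' {u})).Connected) ∧
    (∀ a b : U, H.Adj a b ↔ a ≠ b ∧ ∃ x y, G.Adj x y ∧ f x = a ∧ f y = b)

/-- The medial graph of a plane graph `G`: its vertices are the edges of `G`, two of
them being adjacent iff they are attached (this is the dual of the radial graph). -/
def medial (R : RotationSystem V) : SimpleGraph {e : Sym2 V // e ∈ R.G.edgeSet} :=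
  SimpleGraph.fromRel (fun e f => Attached R e.1 f.1)

/-- The `(n × n)`-grid graph. -/
def gridGraph (n : ℕ) : SimpleGraph (Fin n × Fin n) :=
  SimpleGraph.fromRel (fun a b =>
    (a.1 = b.1 ∧ (a.2 : ℕ) + 1 = (b.2 : ℕ)) ∨ (a.2 = b.2 ∧ (a.1 : ℕ) + 1 = (b.1 : ℕ)))

/-- The faces of a rotation system: orbits of the face-tracing successor on darts. -/
def RotationSystem.Face (R : RotationSystem V) : Type _ :=
  Quot (fun a b : R.G.Dart => R.faceNext a = b)

/-- The edge `e` lies on the boundary of the face `F`. -/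
def EdgeOnFace (R : RotationSystem V) (e : Sym2 V) (F : R.Face) : Prop :=
  ∃ d : R.G.Dart, Quot.mk _ d = F ∧ d.edge = e

/-- A wall-by-wall walk passes through the face `F` if two consecutive edges of the
walk both lie on the boundary of `F`. -/
def WalkThroughFace (R : RotationSystem V) (L : List (Sym2 V)) (F : R.Face) : Prop :=
  ∃ (l₁ : List (Sym2 V)) (e₁ e₂ : Sym2 V) (l₂ : List (Sym2 V)),
    L = l₁ ++ e₁ :: e₂ :: l₂ ∧ EdgeOnFace R e₁ F ∧ EdgeOnFace R e₂ F

end WBW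

/-!
A connected simple graph with triangular faces is 3-connected as soon as it has more than three
vertices: the link of a vertex is a cycle through its neighbours, so deleting two vertices
disconnects neither the neighbours of a deleted vertex nor the graph.

If `H` has at least three vertices, then no face has length at most two. Put into every face a ring
of new vertices, one alongside each dart on the boundary, and a central vertex joined to the ring.
The ring keeps the result simple even if the boundary of the face revisits vertices and edges. Two
edges that are consecutive about an old vertex are separated by exactly two new ones, so edges
attached in `H` are at distance at most three in the medial graph of the refinement. If `H` has at
most two vertices, it embeds into the tetrahedron, here the complete graph on the field with four
elements.
-/

namespace WBW

open Equiv

section Cardinality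

variable {α β : Type*}

theorem nonempty_embedding_of_card_le [Finite α] [Finite β] (h : Nat.card α ≤ Nat.card β) :
    Nonempty (α ↪ β) := by
  have := Fintype.ofFinite α
  have := Fintype.ofFinite β
  rw [Nat.card_eq_fintype_card, Nat.card_eq_fintype_card] at h
  exact Function.Embedding.nonempty_of_card_le h

end Cardinality

section Permutation

variable {α β : Type*}

theorem apply_eq_of_sameCycle {f : Perm α} {g : α → β} (hg : ∀ x, g (f x) = g x) {x y : α}
    (hxy : f.SameCycle x y) : g x = g y := by
  have hpow : ∀ n : ℕ, ∀ z, g ((f ^ n) z) = g z := fun n => by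
    induction n with
    | zero => exact fun _ => rfl
    | succ n ih => exact fun z => by rw [pow_succ', Perm.mul_apply, hg, ih]
  obtain ⟨i, hi⟩ := hxy
  obtain ⟨n, rfl | rfl⟩ := i.eq_nat_or_neg
  · rw [← hi, zpow_natCast, hpow]
  · rw [zpow_neg, zpow_natCast, Perm.inv_eq_iff_eq] at hi
    rw [hi, hpow]

theorem sameCycle_map {f : Perm α} {f' : Perm β} {g : α → β}
    (hg : ∀ x, f'.SameCycle (g x) (g (f x))) {x y : α} (hxy : f.SameCycle x y) :
    f'.SameCycle (g x) (g y) :=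
  Quotient.exact (s := Perm.SameCycle.setoid f') <|
    apply_eq_of_sameCycle (g := fun x => Quotient.mk (Perm.SameCycle.setoid f') (g x))
      (fun x => Quotient.sound (hg x).symm) hxy

theorem quot_mk_eq_iff_sameCycle (f : Perm α) {x y : α} :
    Quot.mk (fun a b => f a = b) x = Quot.mk _ y ↔ f.SameCycle x y := by
  constructor
  · let toSetoid : Quot (fun a b => f a = b) → Quotient (Perm.SameCycle.setoid f) :=
      Quot.lift (Quotient.mk _) fun a b hab => Quotient.sound ⟨1, hab⟩
    exact fun h => Quotient.exact (congrArg toSetoid h)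
  · exact apply_eq_of_sameCycle fun z => (Quot.sound (r := fun a b => f a = b) rfl).symm

theorem card_eq_mul_card_quot {f : Perm α} {n : ℕ} (hf : ∀ x, Function.minimalPeriod f x = n) :
    Nat.card α = n * Nat.card (Quot fun a b => f a = b) := by
  let orbitRel : α → α → Prop := fun a b => f a = b
  have card_fiber : ∀ q : Quot orbitRel, Nonempty ({x // Quot.mk orbitRel x = q} ≃ ZMod n) := by
    rintro ⟨x⟩
    have mem_orbit_iff : ∀ y, Quot.mk orbitRel y = Quot.mk orbitRel x ↔
        y ∈ MulAction.orbit (Subgroup.zpowers f) x := fun y => by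
      rw [eq_comm, quot_mk_eq_iff_sameCycle]
      exact ⟨fun ⟨i, hi⟩ => ⟨⟨f ^ i, i, rfl⟩, hi⟩, by rintro ⟨⟨_, i, rfl⟩, hi⟩; exact ⟨i, hi⟩⟩
    rw [← hf x]
    exact ⟨(Equiv.subtypeEquivRight mem_orbit_iff).trans (MulAction.orbitZPowersEquiv f x)⟩
  calc Nat.card α = Nat.card (Quot orbitRel × ZMod n) := Nat.card_congr <|
        (Equiv.sigmaFiberEquiv (Quot.mk orbitRel)).symm.trans <|
        (Equiv.sigmaCongrRight fun q => (card_fiber q).some).trans (Equiv.sigmaEquivProd _ _)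
    _ = n * Nat.card (Quot orbitRel) := by rw [Nat.card_prod, Nat.card_zmod, mul_comm]

/-- A cycle from which at most one point is removed remains a path: traverse it from the successor
of the removed point. -/
theorem apply_eq_of_sameCycle_of_subsingleton [Finite α] {f : Perm α} {g : α → β} {p : α → Prop}
    {x y : α} (hxy : f.SameCycle x y) (hp : {z | f.SameCycle x z ∧ ¬p z}.Subsingleton)
    (hg : ∀ z, p z → p (f z) → g (f z) = g z) (hx : p x) (hy : p y) : g x = g y := by
  obtain ⟨c, hxc, hc⟩ : ∃ c, f.SameCycle x c ∧ ∀ z, f.SameCycle x z → ¬p z → f z = c := by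
    by_cases hbad : ∃ z, f.SameCycle x z ∧ ¬p z
    · obtain ⟨z, hxz, hz⟩ := hbad
      exact ⟨f z, Perm.sameCycle_apply_right.2 hxz, fun w hxw hw => by rw [hp ⟨hxw, hw⟩ ⟨hxz, hz⟩]⟩
    · exact ⟨x, .refl f x, fun z hxz hz => absurd ⟨z, hxz, hz⟩ hbad⟩
  have eq_start : ∀ n : ℕ, p ((f ^ n) c) → g ((f ^ n) c) = g c := fun n => by
    induction n with
    | zero => exact fun _ => rfl
    | succ n ih =>
      intro hn
      rw [pow_succ', Perm.mul_apply] at hn ⊢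
      by_cases hprev : p ((f ^ n) c)
      · rw [hg _ hprev hn, ih hprev]
      · rw [hc _ (hxc.trans ⟨n, by rw [zpow_natCast]⟩) hprev]
  have eq_start_of_sameCycle : ∀ z, f.SameCycle x z → p z → g z = g c := fun z hxz hz => by
    obtain ⟨n, -, rfl⟩ := (hxc.symm.trans hxz).exists_pow_eq'
    exact eq_start n hz
  rw [eq_start_of_sameCycle x (.refl f x) hx, eq_start_of_sameCycle y hxy hy]

end Permutation

section Dart

variable {V : Type*}

theorem dart_ext_of_fst_eq_of_edge_eq {G : SimpleGraph V} {d d' : G.Dart} (hfst : d.fst = d'.fst)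
    (hedge : d.edge = d'.edge) : d = d' := by
  have hsnd : s(d.fst, d.snd) = s(d.fst, d'.snd) := hedge.trans (by rw [hfst]; rfl)
  exact SimpleGraph.Dart.ext _ _ (Prod.ext hfst (Sym2.congr_right.1 hsnd))

instance finite_dart [Finite V] (G : SimpleGraph V) : Finite G.Dart :=
  Finite.of_injective _ SimpleGraph.Dart.toProd_injective

theorem edge_mem_incidentSet_fst {G : SimpleGraph V} (d : G.Dart) :
    d.edge ∈ incidentSet G d.fst :=
  ⟨d.edge_mem, Sym2.mem_mk_left _ _⟩

theorem exists_dart_of_mem_incidentSet {G : SimpleGraph V} {v : V} {e : Sym2 V}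
    (he : e ∈ incidentSet G v) : ∃ d : G.Dart, d.fst = v ∧ d.edge = e := by
  obtain ⟨he, w, rfl⟩ := he
  exact ⟨⟨(v, w), he⟩, rfl, rfl⟩

namespace RotationSystem

variable (R : RotationSystem V)

@[simp]
theorem faceNext_fst (d : R.G.Dart) : (R.faceNext d).fst = d.snd := rfl

theorem faceNext_edge (d : R.G.Dart) : (R.faceNext d).edge = R.rot d.snd d.edge := by
  unfold faceNext
  exact Sym2.other_spec _

theorem faceNext_bijective : Function.Bijective R.faceNext := by
  constructor
  · intro d d' h
    have hsnd : d.snd = d'.snd := congrArg (fun c => c.fst) h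
    have hedge : d.symm.edge = d'.symm.edge := by
      have := congrArg SimpleGraph.Dart.edge h
      rw [faceNext_edge, faceNext_edge, hsnd] at this
      simpa only [SimpleGraph.Dart.edge_symm] using (R.rot d'.snd).injective this
    exact SimpleGraph.Dart.symm_involutive.injective (dart_ext_of_fst_eq_of_edge_eq hsnd hedge)
  · intro d
    obtain ⟨e, he, hed⟩ := (R.rot_cycleOn d.fst).1.surjOn (edge_mem_incidentSet_fst d)
    obtain ⟨c, hc, rfl⟩ := exists_dart_of_mem_incidentSet he
    refine ⟨c.symm, dart_ext_of_fst_eq_of_edge_eq hc ?_⟩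
    rw [faceNext_edge, SimpleGraph.Dart.edge_symm, ← hed, ← hc]
    rfl

/-- The face-tracing successor `faceNext` as a permutation of the darts. -/
noncomputable def facePerm : Perm R.G.Dart :=
  Equiv.ofBijective R.faceNext R.faceNext_bijective

@[simp]
theorem faceNext_facePerm_symm (d : R.G.Dart) : R.faceNext (R.facePerm.symm d) = d :=
  R.facePerm.apply_symm_apply d

@[simp]
theorem facePerm_symm_faceNext (d : R.G.Dart) : R.facePerm.symm (R.faceNext d) = d :=
  R.facePerm.symm_apply_apply d

@[simp]
theorem facePerm_symm_snd (d : R.G.Dart) : (R.facePerm.symm d).snd = d.fst := by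
  rw [← faceNext_fst, faceNext_facePerm_symm]

/-- The rotation system as a permutation of the darts, turning each dart about its tail. -/
noncomputable def dartRot : Perm R.G.Dart :=
  (SimpleGraph.Dart.symm_involutive.toPerm _).trans R.facePerm

theorem dartRot_apply (d : R.G.Dart) : R.dartRot d = R.faceNext d.symm := rfl

@[simp]
theorem dartRot_symm (d : R.G.Dart) : R.dartRot d.symm = R.faceNext d := by
  rw [dartRot_apply, SimpleGraph.Dart.symm_symm]

@[simp]
theorem dartRot_fst (d : R.G.Dart) : (R.dartRot d).fst = d.fst := rfl

theorem dartRot_edge (d : R.G.Dart) : (R.dartRot d).edge = R.rot d.fst d.edge := by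
  rw [dartRot_apply, faceNext_edge, SimpleGraph.Dart.edge_symm]
  rfl

theorem dartRot_pow_fst_and_edge (n : ℕ) (d : R.G.Dart) :
    ((R.dartRot ^ n) d).fst = d.fst ∧ ((R.dartRot ^ n) d).edge = (R.rot d.fst ^ n) d.edge := by
  induction n with
  | zero => exact ⟨rfl, rfl⟩
  | succ n ih =>
    simp only [pow_succ', Perm.mul_apply, dartRot_fst, dartRot_edge, ih, and_self]

theorem dartRot_sameCycle_iff [Finite V] {x y : R.G.Dart} :
    R.dartRot.SameCycle x y ↔ x.fst = y.fst := by
  refine ⟨apply_eq_of_sameCycle (g := fun d : R.G.Dart => d.fst) R.dartRot_fst, fun h => ?_⟩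
  obtain ⟨n, hn⟩ := (R.rot_cycleOn x.fst).exists_pow_eq' (Set.toFinite _)
    (edge_mem_incidentSet_fst x) (h ▸ edge_mem_incidentSet_fst y)
  refine ⟨n, dart_ext_of_fst_eq_of_edge_eq ?_ ?_⟩
  · rw [zpow_natCast, (R.dartRot_pow_fst_and_edge n x).1, h]
  · rw [zpow_natCast, (R.dartRot_pow_fst_and_edge n x).2, hn]

/-- The face traced out by a dart. -/
def face (d : R.G.Dart) : R.Face := Quot.mk _ d

theorem face_surjective : Function.Surjective R.face := Quot.mk_surjective

instance finite_face [Finite V] : Finite R.Face := .of_surjective _ R.face_surjective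

@[simp]
theorem face_faceNext (d : R.G.Dart) : R.face (R.faceNext d) = R.face d :=
  (Quot.sound (r := fun a b : R.G.Dart => R.faceNext a = b) rfl).symm

theorem face_eq_iff {d d' : R.G.Dart} : R.face d = R.face d' ↔ R.facePerm.SameCycle d d' :=
  quot_mk_eq_iff_sameCycle R.facePerm

end RotationSystem

end Dart

section Euler

variable {V : Type*}

namespace RotationSystem

variable {R : RotationSystem V}

theorem eq_fst_of_faceNext_eq_symm {d : R.G.Dart} (hd : R.faceNext d = d.symm) {w : V}
    (hw : R.G.Adj d.snd w) : w = d.fst := by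
  have hfix : R.rot d.snd d.edge = d.edge := by
    rw [← faceNext_edge, hd, SimpleGraph.Dart.edge_symm]
  have hd_mem : d.edge ∈ incidentSet R.G d.snd := d.edge_symm ▸ edge_mem_incidentSet_fst d.symm
  have hw_mem : s(d.snd, w) ∈ incidentSet R.G d.snd := ⟨hw, Sym2.mem_mk_left _ _⟩
  by_contra hne
  refine (R.rot_cycleOn d.snd).apply_ne ⟨_, hd_mem, _, hw_mem, fun h => hne ?_⟩ hd_mem hfix
  exact (Sym2.congr_right.1 ((Sym2.eq_swap.trans h :))).symm

theorem faceNext_faceNext_ne (hconn : R.G.Connected) (hcard : 3 ≤ Nat.card V)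
    (d : R.G.Dart) : R.faceNext (R.faceNext d) ≠ d := by
  intro hd
  have hsymm : R.faceNext d = d.symm :=
    SimpleGraph.Dart.ext _ _ (Prod.ext rfl (congrArg (fun c => c.fst) hd))
  have hsymm' : R.faceNext d.symm = d.symm.symm := by rw [← hsymm, hd, hsymm, d.symm_symm]
  have hclosed (c : R.G.Dart) (hc : c.fst ∈ ({d.fst, d.snd} : Set V)) :
      c.snd ∈ ({d.fst, d.snd} : Set V) := by
    rcases hc with hc | hc
    · exact .inr (eq_fst_of_faceNext_eq_symm hsymm' (show R.G.Adj d.fst _ from hc ▸ c.adj))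
    · exact .inl (eq_fst_of_faceNext_eq_symm hsymm (hc ▸ c.adj))
  have huniv : ({d.fst, d.snd} : Set V) = Set.univ := by
    refine Set.eq_univ_of_forall fun w => by_contra fun hw => ?_
    obtain ⟨p⟩ := hconn.preconnected d.fst w
    obtain ⟨c, -, hc, hc'⟩ := p.exists_boundary_dart {d.fst, d.snd} (.inl rfl) hw
    exact hc' (hclosed c hc)
  have := Set.ncard_insert_le d.fst {d.snd}
  rw [huniv, Set.ncard_univ, Set.ncard_singleton] at this
  omega

theorem isPlane_iff_of_connected [Nontrivial V] (hconn : R.G.Connected) :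
    R.IsPlane ↔ Nat.card V + R.numFaces = Nat.card R.G.edgeSet + 2 := by
  have hisolated : {v : V | ∀ w, ¬R.G.Adj v w} = ∅ :=
    Set.eq_empty_of_forall_notMem fun v hv =>
      let ⟨w, hw⟩ := hconn.preconnected.exists_adj_of_nontrivial v
      hv w hw
  have := hconn.nonempty
  have := hconn.preconnected.subsingleton_connectedComponent
  have hcomponents : Nat.card R.G.ConnectedComponent = 1 :=
    Nat.card_eq_one_iff_unique.2 ⟨this, ⟨R.G.connectedComponentMk hconn.nonempty.some⟩⟩
  rw [IsPlane, hisolated, hcomponents]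
  simp

theorem card_dart_eq_two_mul_card_edgeSet [Finite V] :
    Nat.card R.G.Dart = 2 * Nat.card R.G.edgeSet := by
  classical
  have := Fintype.ofFinite V
  rw [Nat.card_eq_fintype_card, R.G.dart_card_eq_twice_card_edges, Nat.card_eq_fintype_card,
    SimpleGraph.edgeFinset_card]

theorem Triangulated.card_dart (ht : R.Triangulated) : Nat.card R.G.Dart = 3 * R.numFaces := by
  have := Fact.mk Nat.prime_three
  exact card_eq_mul_card_quot (f := R.facePerm) fun d =>
    Function.minimalPeriod_eq_prime (ht d).1 (ht d).2

theorem Triangulated.isPlane_iff [Finite V] [Nontrivial V] (ht : R.Triangulated)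
    (hconn : R.G.Connected) : R.IsPlane ↔ 6 * Nat.card V = Nat.card R.G.Dart + 12 := by
  have hfaces := ht.card_dart
  have hedges := R.card_dart_eq_two_mul_card_edgeSet
  rw [isPlane_iff_of_connected hconn]
  omega

end RotationSystem

end Euler

namespace RotationSystem.Triangulated

variable {V β : Type*} {R : RotationSystem V} {s : Set V} {g : V → β}

theorem adj_snd_faceNext_fst (ht : R.Triangulated) (d : R.G.Dart) :
    R.G.Adj (R.faceNext d).snd d.fst := by
  have hfst : (R.faceNext (R.faceNext d)).snd = d.fst := congrArg (fun c => c.fst) (ht d).1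
  have := (R.faceNext (R.faceNext d)).adj
  rwa [hfst] at this

theorem adj_snd_dartRot (ht : R.Triangulated) (d : R.G.Dart) :
    R.G.Adj d.snd (R.dartRot d).snd :=
  (ht.adj_snd_faceNext_fst d.symm).symm

/-- The link of a vertex is a cycle, so it stays connected when at most one further vertex is
removed. -/
theorem apply_snd_eq_of_fst_eq [Finite V] (ht : R.Triangulated) (hs : s.ncard ≤ 2)
    (hg : ∀ u v, u ∉ s → v ∉ s → R.G.Adj u v → g u = g v) {d d' : R.G.Dart} (hdd' : d.fst = d'.fst)
    (hd : d.snd ∉ s) (hd' : d'.snd ∉ s) : g d.snd = g d'.snd := by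
  by_cases hfst : d.fst ∈ s
  · have hlink : (s \ {d.fst}).Subsingleton := by
      have := Set.ncard_sdiff_singleton_lt_of_mem hfst
      exact Set.ncard_le_one_iff_subsingleton.1 (by omega)
    refine apply_eq_of_sameCycle_of_subsingleton (g := fun c : R.G.Dart => g c.snd)
      (p := fun c => c.snd ∉ s) (R.dartRot_sameCycle_iff.2 hdd') ?_
      (fun c hc hc' => (hg _ _ hc hc' (ht.adj_snd_dartRot c)).symm) hd hd'
    rintro c ⟨hc, hcs⟩ c' ⟨hc', hcs'⟩
    rw [dartRot_sameCycle_iff] at hc hc'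
    refine SimpleGraph.Dart.ext _ _ (Prod.ext (hc.symm.trans hc') (hlink ?_ ?_))
    · exact ⟨not_not.1 hcs, hc ▸ c.snd_ne_fst⟩
    · exact ⟨not_not.1 hcs', hc' ▸ c'.snd_ne_fst⟩
  · rw [← hg _ _ hfst hd d.adj, hdd', hg _ _ (hdd' ▸ hfst) hd' d'.adj]

theorem apply_eq_of_mem_insert_neighborSet [Finite V] (ht : R.Triangulated) (hs : s.ncard ≤ 2)
    (hg : ∀ u v, u ∉ s → v ∉ s → R.G.Adj u v → g u = g v) {u z z' : V}
    (hz : z ∈ insert u (R.G.neighborSet u)) (hz' : z' ∈ insert u (R.G.neighborSet u))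
    (hzs : z ∉ s) (hzs' : z' ∉ s) : g z = g z' := by
  rcases hz with rfl | hz <;> rcases hz' with rfl | hz'
  · rfl
  · exact hg _ _ hzs hzs' hz'
  · exact (hg _ _ hzs' hzs hz).symm
  · exact ht.apply_snd_eq_of_fst_eq hs hg (d := ⟨(u, z), hz⟩) (d' := ⟨(u, z'), hz'⟩) rfl hzs hzs'

theorem exists_mem_insert_neighborSet_inter [Finite V] (ht : R.Triangulated) (hs : s.ncard ≤ 2)
    {u v : V} (huv : R.G.Adj u v) :
    ∃ z ∉ s, z ∈ insert u (R.G.neighborSet u) ∧ z ∈ insert v (R.G.neighborSet v) := by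
  by_cases hu : u ∈ s
  · by_cases hv : v ∈ s
    · let d : R.G.Dart := ⟨(u, v), huv⟩
      have hvw : R.G.Adj v (R.faceNext d).snd := (R.faceNext d).adj
      have hwu : R.G.Adj (R.faceNext d).snd u := ht.adj_snd_faceNext_fst d
      have hs_eq : {u, v} = s :=
        Set.eq_of_subset_of_ncard_le (Set.pair_subset hu hv) (by rwa [Set.ncard_pair huv.ne])
      refine ⟨_, ?_, .inr hwu.symm, .inr hvw⟩
      rw [← hs_eq]
      rintro (h | h)
      exacts [hwu.ne h, hvw.ne' h]
    · exact ⟨v, hv, .inr huv, .inl rfl⟩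
  · exact ⟨u, hu, .inl rfl, .inr huv.symm⟩

theorem apply_eq_of_notMem [Finite V] (ht : R.Triangulated) (hconn : R.G.Preconnected)
    (hs : s.ncard ≤ 2) (hg : ∀ u v, u ∉ s → v ∉ s → R.G.Adj u v → g u = g v) {a b : V}
    (ha : a ∉ s) (hb : b ∉ s) : g a = g b := by
  have eq_along_walk {u v : V} (q : R.G.Walk u v) :
      ∀ z ∉ s, z ∈ insert u (R.G.neighborSet u) → v ∉ s → g z = g v := by
    induction q with
    | nil =>
      exact fun z hzs hz hvs => ht.apply_eq_of_mem_insert_neighborSet hs hg hz (.inl rfl) hzs hvs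
    | cons huv _ ih =>
      intro z hzs hz hvs
      obtain ⟨c, hcs, hcu, hcv⟩ := ht.exists_mem_insert_neighborSet_inter hs huv
      rw [ht.apply_eq_of_mem_insert_neighborSet hs hg hz hcu hzs hcs, ih c hcs hcv hvs]
  obtain ⟨q⟩ := hconn a b
  exact eq_along_walk q a ha (.inl rfl) hb

theorem threeConnected [Finite V] (ht : R.Triangulated) (hconn : R.G.Preconnected)
    (hcard : 3 < Nat.card V) : ThreeConnected R.G := by
  refine ⟨hcard, fun s hs => SimpleGraph.connected_iff_exists_forall_reachable _ |>.2 ?_⟩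
  obtain ⟨a, ha⟩ : ∃ a, a ∉ s := by
    by_contra! hall
    rw [Set.eq_univ_of_forall hall, Set.ncard_univ] at hs
    omega
  refine ⟨⟨a, ha⟩, fun ⟨b, hb⟩ => ?_⟩
  let reachable (v : V) : Prop := ∃ hv : v ∈ sᶜ, (R.G.induce sᶜ).Reachable ⟨a, ha⟩ ⟨v, hv⟩
  have reachable_congr : ∀ u v, u ∉ s → v ∉ s → R.G.Adj u v → reachable u = reachable v := by
    intro u v hu hv huv
    have huv' : (R.G.induce sᶜ).Adj ⟨u, hu⟩ ⟨v, hv⟩ := huv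
    exact propext ⟨fun ⟨_, h⟩ => ⟨hv, h.trans huv'.reachable⟩,
      fun ⟨_, h⟩ => ⟨hu, h.trans huv'.symm.reachable⟩⟩
  obtain ⟨_, h⟩ := (ht.apply_eq_of_notMem hconn hs reachable_congr ha hb).mp ⟨ha, .refl _⟩
  exact h

end RotationSystem.Triangulated

theorem edist_map_le_mul_length {α β : Type*} {G : SimpleGraph α} {H : SimpleGraph β} {f : α → β}
    {k : ℕ} (hf : ∀ a b, G.Adj a b → H.edist (f a) (f b) ≤ k) {a b : α} (p : G.Walk a b) :
    H.edist (f a) (f b) ≤ k * p.length := by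
  induction p with
  | nil => simp
  | cons h q ih =>
    refine SimpleGraph.edist_triangle.trans ((add_le_add (hf _ _ h) ih).trans_eq ?_)
    rw [SimpleGraph.Walk.length_cons]
    push_cast
    ring

section WbwDist

variable {U V : Type*} {R : RotationSystem V} {S : RotationSystem U} {x y : V}

theorem wbwDist_le_length {L : List (Sym2 V)} (hL : IsWbwWalkFromTo R x y L) :
    wbwDist R x y ≤ L.length :=
  sInf_le ⟨L, hL, rfl⟩

theorem one_le_wbwDist : 1 ≤ wbwDist R x y := by
  refine le_sInf ?_
  rintro _ ⟨L, hL, rfl⟩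
  exact_mod_cast List.length_pos_iff.2 hL.1.1

theorem attached_comm {e e' : Sym2 V} : Attached R e e' ↔ Attached R e' e := by
  simp only [Attached, and_left_comm, or_comm]

theorem medial_adj {e e' : {e // e ∈ R.G.edgeSet}} :
    (medial R).Adj e e' ↔ e ≠ e' ∧ Attached R e.1 e'.1 := by
  rw [medial, SimpleGraph.fromRel_adj, attached_comm (e := e'.1), or_self]

theorem wbwDist_le_medial_edist_add_one {e e' : {e // e ∈ R.G.edgeSet}} (hx : x ∈ e.1)
    (hy : y ∈ e'.1) : wbwDist R x y ≤ (medial R).edist e e' + 1 := by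
  classical
  by_cases htop : (medial R).edist e e' = ⊤
  · simp [htop]
  obtain ⟨p, hp⟩ := SimpleGraph.exists_walk_of_edist_ne_top htop
  have hwalk : IsWbwWalkFromTo R x y (p.bypass.support.map Subtype.val) := by
    refine ⟨⟨by simp [-List.map_subtype], ?_, ?_, ?_⟩, ⟨e, ?_, hx⟩, ⟨e', ?_, hy⟩⟩
    · exact p.bypass_isPath.support_nodup.map Subtype.val_injective
    · simp +contextual
    · exact (List.isChain_map _).2 <|
        p.bypass.isChain_adj_support.imp fun _ _ h => (medial_adj.1 h).2
    · rw [List.head?_map, List.head?_eq_some_head p.bypass.support_ne_nil, p.bypass.head_support]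
      rfl
    · rw [List.getLast?_map, List.getLast?_eq_some_getLast p.bypass.support_ne_nil,
        p.bypass.getLast_support]
      rfl
  calc wbwDist R x y ≤ (p.bypass.support.map Subtype.val).length := wbwDist_le_length hwalk
    _ = p.bypass.length + 1 := by simp
    _ ≤ p.length + 1 := by gcongr; exact p.length_bypass_le_length
    _ = (medial R).edist e e' + 1 := by rw [hp]

theorem IsWbwWalkFromTo.exists_medial_walk {L : List (Sym2 V)} (hL : IsWbwWalkFromTo R x y L) :
    ∃ (e e' : {e // e ∈ R.G.edgeSet}) (p : (medial R).Walk e e'),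
      x ∈ e.1 ∧ y ∈ e'.1 ∧ p.length + 1 = L.length := by
  obtain ⟨⟨hne, hnodup, hedge, hchain⟩, ⟨e, he, hx⟩, ⟨e', he', hy⟩⟩ := hL
  lift L to List {e // e ∈ R.G.edgeSet} using hedge
  rw [ne_eq, List.map_eq_nil_iff] at hne
  have hdistinct : L.IsChain (· ≠ ·) := (hnodup.of_map _).isChain
  have hattached : L.IsChain fun e f => Attached R e.1 f.1 := (List.isChain_map _).1 hchain
  have hchain' : L.IsChain (medial R).Adj := List.isChain_iff_getElem.2 fun i hi =>
    medial_adj.2 ⟨hdistinct.getElem i hi, hattached.getElem i hi⟩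
  have hsupport := SimpleGraph.Walk.support_ofSupport hne hchain'
  refine ⟨L.head hne, L.getLast hne, .ofSupport L hne hchain', ?_, ?_, ?_⟩
  · rw [List.head?_map, List.head?_eq_some_head hne] at he
    cases he
    exact hx
  · rw [List.getLast?_map, List.getLast?_eq_some_getLast hne] at he'
    cases he'
    exact hy
  · rw [← SimpleGraph.Walk.length_support, hsupport, List.length_map]

/-- The edge of a dart, as a vertex of the medial graph. -/
def dartEdge (d : R.G.Dart) : {e // e ∈ R.G.edgeSet} := ⟨d.edge, d.edge_mem⟩

theorem medial_edist_dartRot_le_one (d : R.G.Dart) :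
    (medial R).edist (dartEdge d) (dartEdge (R.dartRot d)) ≤ 1 := by
  rw [SimpleGraph.edist_le_one_iff_adj_or_eq, medial_adj]
  by_cases h : dartEdge d = dartEdge (R.dartRot d)
  · exact .inr h
  · exact .inl ⟨h, d.fst, edge_mem_incidentSet_fst d, edge_mem_incidentSet_fst (R.dartRot d),
      .inl (R.dartRot_edge d).symm⟩

theorem exists_dart_of_attached {e e' : {e // e ∈ R.G.edgeSet}} (h : Attached R e.1 e'.1) :
    ∃ d, s(dartEdge d, dartEdge (R.dartRot d)) = s(e, e') := by
  obtain ⟨e, he⟩ := e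
  obtain ⟨e', he'⟩ := e'
  obtain ⟨v, hev, hev', rfl | rfl⟩ := h
  · obtain ⟨d, rfl, rfl⟩ := exists_dart_of_mem_incidentSet hev
    exact ⟨d, congrArg (s(dartEdge d, ·)) (Subtype.ext (R.dartRot_edge d))⟩
  · obtain ⟨d, rfl, rfl⟩ := exists_dart_of_mem_incidentSet hev'
    rw [Sym2.eq_swap]
    exact ⟨d, congrArg (s(dartEdge d, ·)) (Subtype.ext (R.dartRot_edge d))⟩

theorem exists_isWbwWalkFromTo_of_wbwDist_ne_top (h : wbwDist R x y ≠ ⊤) :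
    ∃ L, IsWbwWalkFromTo R x y L ∧ (L.length : ℕ∞) = wbwDist R x y :=
  csInf_mem (s := {n : ℕ∞ | ∃ L, IsWbwWalkFromTo R x y L ∧ (L.length : ℕ∞) = n}) <|
    Set.nonempty_iff_ne_empty.2 fun hempty => h (by rw [wbwDist, hempty, sInf_empty])

theorem wbwDist_map_le {k : ℕ} (φ : R.G →g S.G)
    (hφ : ∀ d, (medial S).edist (φ.mapEdgeSet (dartEdge d)) (φ.mapEdgeSet (dartEdge (R.dartRot d)))
      ≤ k) (x y : V) :
    wbwDist S (φ x) (φ y) ≤ (k + 1) * wbwDist R x y := by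
  by_cases htop : wbwDist R x y = ⊤
  · simp [htop]
  obtain ⟨L, hL, hlength⟩ := exists_isWbwWalkFromTo_of_wbwDist_ne_top htop
  obtain ⟨e, e', p, hx, hy, hp⟩ := hL.exists_medial_walk
  have hadj (f f') (hff' : (medial R).Adj f f') :
      (medial S).edist (φ.mapEdgeSet f) (φ.mapEdgeSet f') ≤ k := by
    obtain ⟨d, hd⟩ := exists_dart_of_attached (medial_adj.1 hff').2
    rcases Sym2.eq_iff.1 hd with ⟨rfl, rfl⟩ | ⟨rfl, rfl⟩
    · exact hφ d
    · exact SimpleGraph.edist_comm.trans_le (hφ d)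
  calc wbwDist S (φ x) (φ y)
      ≤ (medial S).edist (φ.mapEdgeSet e) (φ.mapEdgeSet e') + 1 :=
        wbwDist_le_medial_edist_add_one (Sym2.mem_map.2 ⟨x, hx, rfl⟩) (Sym2.mem_map.2 ⟨y, hy, rfl⟩)
    _ ≤ k * p.length + 1 := by gcongr; exact edist_map_le_mul_length hadj p
    _ ≤ (k + 1) * (p.length + 1) := by norm_cast; nlinarith
    _ = (k + 1) * wbwDist R x y := by rw [← hlength, ← hp]; norm_cast

theorem wbwDist_le_one_of_mem {e : Sym2 V} (he : e ∈ R.G.edgeSet) (hx : x ∈ e) (hy : y ∈ e) :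
    wbwDist R x y ≤ 1 := by
  simpa using wbwDist_le_medial_edist_add_one (e := ⟨e, he⟩) (e' := ⟨e, he⟩) hx hy

theorem wbwDist_le_one_of_eq_top [Nontrivial V] (h : R.G = ⊤) (x y : V) : wbwDist R x y ≤ 1 := by
  obtain ⟨z, hxz, hy⟩ : ∃ z, x ≠ z ∧ y ∈ s(x, z) := by
    by_cases hxy : x = y
    · obtain ⟨z, hz⟩ := exists_ne x
      exact ⟨z, hz.symm, hxy ▸ Sym2.mem_mk_left x z⟩
    · exact ⟨y, hxy, Sym2.mem_mk_right x y⟩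
  exact wbwDist_le_one_of_mem (e := s(x, z)) (by simpa [h] using hxz) (Sym2.mem_mk_left x z) hy

theorem SubgraphVia.power {τ : V → U} (hτ : SubgraphVia R.G S.G τ) {c : ℕ}
    (hdist : ∀ x y, wbwDist S (τ x) (τ y) ≤ c * wbwDist R x y) (l : ℕ) :
    SubgraphVia (R.power l) (S.power (c * l)) τ := by
  refine ⟨hτ.1, fun x y hxy => ?_⟩
  rcases hxy with hxy | ⟨hne, hxy⟩
  · exact .inl (hτ.2 x y hxy)
  · refine .inr ⟨hτ.1.ne hne, hxy.imp (fun h => ?_) fun h => ?_⟩ <;>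
    · refine (hdist _ _).trans ?_
      push_cast
      gcongr

end WbwDist

/-- A combinatorial map on a type `D` of darts: `next` traces the faces, `rev` reverses the darts,
and `tail` labels the darts by vertices in such a way that the orbits of `next ∘ rev` are the fibres
of `tail` and that the underlying graph is simple. -/
structure CombinatorialMap (D W : Type*) where
  next : Perm D
  rev : Perm D
  tail : D → W
  rev_rev : ∀ x, rev (rev x) = x
  tail_next : ∀ x, tail (next x) = tail (rev x)
  sameCycle_of_tail_eq : ∀ x y, tail x = tail y → (next * rev).SameCycle x y
  tail_rev_ne : ∀ x, tail (rev x) ≠ tail x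
  ext_tail : ∀ x y, tail x = tail y → tail (rev x) = tail (rev y) → x = y

namespace CombinatorialMap

variable {D W : Type*} (M : CombinatorialMap D W)

/-- The underlying graph of a combinatorial map. -/
def graph : SimpleGraph W where
  Adj a b := ∃ x, M.tail x = a ∧ M.tail (M.rev x) = b
  symm := ⟨by rintro _ _ ⟨x, rfl, rfl⟩; exact ⟨M.rev x, rfl, by rw [M.rev_rev]⟩⟩
  loopless := ⟨by rintro _ ⟨x, rfl, hx⟩; exact M.tail_rev_ne x hx⟩

theorem graph_adj_tail (x : D) : M.graph.Adj (M.tail x) (M.tail (M.rev x)) := ⟨x, rfl, rfl⟩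

/-- The elements of `D` as the darts of the underlying graph. -/
noncomputable def dart : D ≃ M.graph.Dart :=
  Equiv.ofBijective (fun x => ⟨(M.tail x, M.tail (M.rev x)), M.graph_adj_tail x⟩) <| by
    refine ⟨fun x y hxy => ?_, fun ⟨⟨a, b⟩, x, hxa, hxb⟩ => ⟨x, ?_⟩⟩
    · obtain ⟨htail, hrev⟩ := Prod.ext_iff.1 (congrArg SimpleGraph.Dart.toProd hxy)
      exact M.ext_tail x y htail hrev
    · exact SimpleGraph.Dart.ext _ _ (Prod.ext hxa hxb)

@[simp]
theorem dart_fst (x : D) : (M.dart x).fst = M.tail x := rfl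

theorem dart_rev (x : D) : M.dart (M.rev x) = (M.dart x).symm :=
  SimpleGraph.Dart.ext _ _ (Prod.ext rfl (congrArg M.tail (M.rev_rev x)))

/-- The vertex rotation `next ∘ rev`. -/
def turn : Perm D := M.next * M.rev

theorem turn_apply (x : D) : M.turn x = M.next (M.rev x) := rfl

theorem tail_turn (x : D) : M.tail (M.turn x) = M.tail x := by
  rw [turn_apply, M.tail_next, M.rev_rev]

/-- The darts with a given tail correspond to the edges incident to it. -/
noncomputable def incidentEquiv (w : W) : {x // M.tail x = w} ≃ incidentSet M.graph w :=
  Equiv.ofBijective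
    (fun x => ⟨(M.dart x).edge, by
      simpa only [dart_fst, x.2] using edge_mem_incidentSet_fst (M.dart x)⟩) <| by
    refine ⟨fun x y hxy => ?_, fun ⟨e, he⟩ => ?_⟩
    · exact Subtype.ext <| M.dart.injective <|
        dart_ext_of_fst_eq_of_edge_eq (x.2.trans y.2.symm) (congrArg Subtype.val hxy)
    · obtain ⟨d, rfl, rfl⟩ := exists_dart_of_mem_incidentSet he
      obtain ⟨x, rfl⟩ := M.dart.surjective d
      exact ⟨⟨x, rfl⟩, rfl⟩

/-- The restriction of `turn` to the darts with tail `w`. -/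
def turnAt (w : W) : Perm {x // M.tail x = w} :=
  M.turn.subtypePerm fun x => by rw [tail_turn]

theorem turnAt_isCycleOn (w : W) : (M.turnAt w).IsCycleOn Set.univ :=
  ⟨Set.bijOn_univ.2 (M.turnAt w).bijective, fun x _ y _ =>
    Perm.sameCycle_subtypePerm.2 (M.sameCycle_of_tail_eq x y (x.2.trans y.2.symm))⟩

open Classical in
/-- The rotation system of a combinatorial map. -/
noncomputable abbrev toRotationSystem : RotationSystem W where
  G := M.graph
  rot w := (M.turnAt w).extendDomain (M.incidentEquiv w)
  rot_cycleOn w := by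
    simpa only [Set.image_univ, Set.range_comp, (M.incidentEquiv w).range_eq_univ,
      Subtype.range_coe] using (M.turnAt_isCycleOn w).extendDomain (M.incidentEquiv w)
  rot_fixed _ _ he := Perm.extendDomain_apply_not_subtype _ _ he

theorem dartRot_dart (x : D) : M.toRotationSystem.dartRot (M.dart x) = M.dart (M.turn x) := by
  classical
  refine dart_ext_of_fst_eq_of_edge_eq (M.tail_turn x).symm ?_
  rw [RotationSystem.dartRot_edge]
  exact Perm.extendDomain_apply_image (M.turnAt _) (M.incidentEquiv _) ⟨x, rfl⟩

theorem medial_edist_turn_pow_le (x : D) (n : ℕ) :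
    (medial M.toRotationSystem).edist (dartEdge (M.dart x)) (dartEdge (M.dart ((M.turn ^ n) x)))
      ≤ n := by
  induction n with
  | zero => simp
  | succ n ih =>
    have hstep := medial_edist_dartRot_le_one (R := M.toRotationSystem) (M.dart ((M.turn ^ n) x))
    rw [dartRot_dart] at hstep
    rw [pow_succ', Perm.mul_apply]
    exact_mod_cast SimpleGraph.edist_triangle.trans (add_le_add ih hstep)

theorem wbwDist_tail_rev_le (x : D) (n : ℕ) :
    wbwDist M.toRotationSystem (M.tail (M.rev x)) (M.tail (M.rev ((M.turn ^ n) x))) ≤ n + 1 := by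
  refine (wbwDist_le_medial_edist_add_one (Sym2.mem_mk_right _ _) (Sym2.mem_mk_right _ _)).trans
    (add_le_add_left (M.medial_edist_turn_pow_le x n) 1)

theorem faceNext_dart (x : D) : M.toRotationSystem.faceNext (M.dart x) = M.dart (M.next x) := by
  have h := M.dartRot_dart (M.rev x)
  rwa [turn_apply, M.rev_rev, dart_rev, RotationSystem.dartRot_symm] at h

theorem triangulated (h : ∀ x, M.next (M.next (M.next x)) = x) :
    M.toRotationSystem.Triangulated := by
  refine M.dart.forall_congr_right.1 fun x => ?_
  simp only [faceNext_dart, h, true_and]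
  exact fun hx => M.tail_rev_ne x <| by rw [← M.tail_next, M.dart.injective hx]

end CombinatorialMap

section CompleteMap

variable {F : Type*} [Field F] (ω : Fˣ) (hω : ∀ δ, δ ∈ Subgroup.zpowers ω)

/-- Biggs' map of the complete graph on a field whose unit group is generated by `ω`: the dart
`(a, δ)` leads from `a` to `a + δ`, and the rotation multiplies `δ` by `ω`. -/
def completeMap : CombinatorialMap (F × Fˣ) F where
  next :=
    { toFun x := (x.1 + x.2, -(ω * x.2))
      invFun x := (x.1 + ω⁻¹ * x.2, -(ω⁻¹ * x.2))
      left_inv x := by simp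
      right_inv x := by simp }
  rev :=
    { toFun x := (x.1 + x.2, -x.2)
      invFun x := (x.1 + x.2, -x.2)
      left_inv x := by simp
      right_inv x := by simp }
  tail := Prod.fst
  rev_rev x := by simp
  tail_next x := rfl
  sameCycle_of_tail_eq := by
    rintro ⟨a, δ⟩ ⟨_, ε⟩ rfl
    have h : (Equiv.mulLeft ω).SameCycle δ ε := by
      obtain ⟨n, hn⟩ := Subgroup.mem_zpowers_iff.1 (hω (ε * δ⁻¹))
      exact ⟨n, by simp [zpow_mulLeft, hn]⟩
    exact sameCycle_map (g := Prod.mk a) (fun x => ⟨1, by simp⟩) h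
  tail_rev_ne x := by simp
  ext_tail x y h h' := by simp_all [Prod.ext_iff, Units.ext_iff]

theorem completeMap_graph : (completeMap ω hω).graph = ⊤ := by
  ext a b
  refine ⟨SimpleGraph.Adj.ne, fun hab => ⟨(a, .mk0 (b - a) (sub_ne_zero.2 hab.symm)), rfl, ?_⟩⟩
  exact add_sub_cancel a b

theorem completeMap_triangulated (h : (ω : F) ^ 2 - ω + 1 = 0) :
    (completeMap ω hω).toRotationSystem.Triangulated := by
  refine CombinatorialMap.triangulated _ fun x => Prod.ext ?_ (Units.ext ?_)
  · simp only [completeMap, Units.val_inv_eq_inv_val, Equiv.coe_fn_mk, Units.val_neg, Units.val_mul,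
      mul_neg, neg_neg]
    linear_combination (x.2 : F) * h
  · simp only [completeMap, Units.val_inv_eq_inv_val, Equiv.coe_fn_mk, Units.val_neg, Units.val_mul,
      mul_neg, neg_neg]
    linear_combination -(ω + 1) * (x.2 : F) * h

theorem exists_unit_of_card_eq_four [CharP F 2] (hF : Nat.card F = 4) :
    ∃ ω : Fˣ, (∀ δ, δ ∈ Subgroup.zpowers ω) ∧ (ω : F) ^ 2 - ω + 1 = 0 := by
  have : Finite F := Nat.finite_of_card_ne_zero (by omega)
  obtain ⟨ω, hω⟩ := IsCyclic.exists_generator (α := Fˣ)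
  have horder : orderOf ω = 3 := by
    rw [orderOf_eq_card_of_forall_mem_zpowers hω, Nat.card_units, hF]
  have hcube : (ω : F) ^ 3 = 1 := by
    rw [← Units.val_pow_eq_pow_val, ← horder, pow_orderOf_eq_one, Units.val_one]
  have hne : (ω : F) ≠ 1 := fun h => by
    rw [Units.val_eq_one.1 h, orderOf_one] at horder
    omega
  refine ⟨ω, hω, mul_left_cancel₀ (sub_ne_zero.2 hne) ?_⟩
  linear_combination hcube - (ω ^ 2 - ω : F) * CharTwo.two_eq_zero (R := F)

theorem exists_triangulated_eq_top :
    ∃ (F : Type) (_ : Finite F) (S : RotationSystem F),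
      Nat.card F = 4 ∧ S.G = ⊤ ∧ S.IsPlane ∧ ThreeConnected S.G ∧ S.Triangulated := by
  have hcard : Nat.card (GaloisField 2 2) = 4 := GaloisField.card 2 2 two_ne_zero
  obtain ⟨ω, hω, h⟩ := exists_unit_of_card_eq_four hcard
  have htop := completeMap_graph ω hω
  have ht := completeMap_triangulated ω hω h
  have hconn : (completeMap ω hω).graph.Connected := htop ▸ SimpleGraph.connected_top
  refine ⟨_, inferInstance, (completeMap ω hω).toRotationSystem, hcard, htop,
    (ht.isPlane_iff hconn).2 ?_, ht.threeConnected hconn.preconnected (by omega), ht⟩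
  rw [← Nat.card_congr (completeMap ω hω).dart, Nat.card_prod, Nat.card_units, hcard]

end CompleteMap

/-- The sides of the three triangles that the refinement of a rotation system puts next to a dart
`d` from `u` to `v`, into the face traced by `d`. If `m` and `m'` are the new vertices placed
alongside `d` and alongside its successor on the face, and `c` is the new vertex at the centre of
the face, these are the `edge` triangle `u v m`, the `corner` triangle `m v m'` and the `center`
triangle `m m' c`. -/
inductive TriangleSide
  | edge₀ | edge₁ | edge₂ | corner₀ | corner₁ | corner₂ | center₀ | center₁ | center₂

namespace TriangleSide

instance : Fintype TriangleSide where
  elems := ⟨[edge₀, edge₁, edge₂, corner₀, corner₁, corner₂, center₀, center₁, center₂], by simp⟩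
  complete k := by cases k <;> simp

/-- The next side of the same triangle. -/
def next : TriangleSide → TriangleSide
  | edge₀ => edge₁ | edge₁ => edge₂ | edge₂ => edge₀
  | corner₀ => corner₁ | corner₁ => corner₂ | corner₂ => corner₀
  | center₀ => center₁ | center₁ => center₂ | center₂ => center₀

theorem next_next_next (k : TriangleSide) : k.next.next.next = k := by cases k <;> rfl

theorem card : Nat.card TriangleSide = 9 := by
  rw [Nat.card_eq_fintype_card]
  rfl

end TriangleSide

namespace RotationSystem

open TriangleSide

variable {V : Type*} (R : RotationSystem V)

/-- The face-tracing permutation of the refinement. -/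
def refineNext : Perm (R.G.Dart × TriangleSide) where
  toFun x := (x.1, x.2.next)
  invFun x := (x.1, x.2.next.next)
  left_inv x := by simp only [next_next_next]
  right_inv x := by simp only [next_next_next]

/-- The side on the opposite side of the same edge of the refinement. -/
noncomputable def refineOpposite : R.G.Dart × TriangleSide → R.G.Dart × TriangleSide
  | (d, edge₀) => (d.symm, edge₀)
  | (d, edge₁) => (d, corner₀)
  | (d, edge₂) => (R.facePerm.symm d, corner₁)
  | (d, corner₀) => (d, edge₁)
  | (d, corner₁) => (R.faceNext d, edge₂)
  | (d, corner₂) => (d, center₀)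
  | (d, center₀) => (d, corner₂)
  | (d, center₁) => (R.faceNext d, center₂)
  | (d, center₂) => (R.facePerm.symm d, center₁)

theorem refineOpposite_involutive : Function.Involutive R.refineOpposite := by
  rintro ⟨d, _ | _⟩ <;> simp [refineOpposite]

/-- The vertex of the refinement at which a side starts. The new vertices are one for each dart, and
one for each face. -/
noncomputable def refineTail : R.G.Dart × TriangleSide → V ⊕ R.G.Dart ⊕ R.Face
  | (d, edge₀) => .inl d.fst
  | (d, edge₁) => .inl d.snd
  | (d, edge₂) => .inr (.inl d)
  | (d, corner₀) => .inr (.inl d)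
  | (d, corner₁) => .inl d.snd
  | (d, corner₂) => .inr (.inl (R.faceNext d))
  | (d, center₀) => .inr (.inl d)
  | (d, center₁) => .inr (.inl (R.faceNext d))
  | (d, center₂) => .inr (.inr (R.face d))

theorem refineTail_refineNext (x : R.G.Dart × TriangleSide) :
    R.refineTail (R.refineNext x) = R.refineTail (R.refineOpposite x) := by
  rcases x with ⟨d, _ | _⟩ <;> simp [refineNext, refineOpposite, refineTail, next]

/-- The vertex rotation of the refinement. -/
noncomputable def refineTurn : Perm (R.G.Dart × TriangleSide) :=
  R.refineNext * R.refineOpposite_involutive.toPerm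

theorem refineTurn_apply (x : R.G.Dart × TriangleSide) :
    R.refineTurn x = R.refineNext (R.refineOpposite x) := rfl

theorem refineTail_refineTurn (x : R.G.Dart × TriangleSide) :
    R.refineTail (R.refineTurn x) = R.refineTail x := by
  rw [refineTurn_apply, refineTail_refineNext, refineOpposite_involutive]

theorem refineTurn_sameCycle_edge₀ [Finite V] {d d' : R.G.Dart} (h : d.fst = d'.fst) :
    R.refineTurn.SameCycle (d, edge₀) (d', edge₀) :=
  sameCycle_map (g := fun d => (d, edge₀)) (fun _ => ⟨3, rfl⟩) (R.dartRot_sameCycle_iff.2 h)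

theorem refineTurn_sameCycle_center₂ {d d' : R.G.Dart} (h : R.face d = R.face d') :
    R.refineTurn.SameCycle (d, center₂) (d', center₂) :=
  sameCycle_map (g := fun d => (d, center₂))
    (fun d => .symm ⟨1, congrArg (·, center₂) (R.facePerm.symm_apply_apply d)⟩)
    (R.face_eq_iff.1 h)

theorem exists_refineTurn_sameCycle (x : R.G.Dart × TriangleSide) :
    ∃ d, R.refineTurn.SameCycle x (d, edge₀) ∨ R.refineTurn.SameCycle x (d, edge₂) ∨
      R.refineTurn.SameCycle x (d, center₂) := by
  obtain ⟨d, _ | _⟩ := x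
  · exact ⟨d, .inl .rfl⟩
  · exact ⟨R.faceNext d, .inl ⟨2, rfl⟩⟩
  · exact ⟨d, .inr (.inl .rfl)⟩
  · exact ⟨d, .inr (.inl ⟨1, rfl⟩)⟩
  · exact ⟨R.faceNext d, .inl ⟨1, rfl⟩⟩
  · exact ⟨R.faceNext d, .inr (.inl ⟨4, rfl⟩)⟩
  · exact ⟨d, .inr (.inl ⟨2, rfl⟩)⟩
  · exact ⟨R.faceNext d, .inr (.inl ⟨3, rfl⟩)⟩
  · exact ⟨d, .inr (.inr .rfl)⟩

end RotationSystem

namespace RotationSystem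

open TriangleSide

variable {V : Type*} (R : RotationSystem V)

theorem faceNext_ne_of_faceNext_faceNext_ne (h : ∀ d, R.faceNext (R.faceNext d) ≠ d)
    (d : R.G.Dart) : R.faceNext d ≠ d := fun hd => h d (by rw [hd, hd])

theorem refineTail_refineOpposite_ne (h : ∀ d, R.faceNext d ≠ d) (x : R.G.Dart × TriangleSide) :
    R.refineTail (R.refineOpposite x) ≠ R.refineTail x := by
  rcases x with ⟨d, _ | _⟩ <;> simp [refineOpposite, refineTail, h, (h _).symm, d.adj.ne']

theorem refine_ext (h : ∀ d, R.faceNext (R.faceNext d) ≠ d) {x y : R.G.Dart × TriangleSide}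
    (htail : R.refineTail x = R.refineTail y)
    (hhead : R.refineTail (R.refineOpposite x) = R.refineTail (R.refineOpposite y)) : x = y := by
  have hinj := R.faceNext_bijective.injective
  have hfst := R.faceNext_fst
  have hloop (d : R.G.Dart) : d.fst ≠ d.snd := d.adj.ne
  have hdart {d d' : R.G.Dart} (hfst : d.fst = d'.fst) (hsnd : d.snd = d'.snd) : d = d' :=
    SimpleGraph.Dart.ext _ _ (Prod.ext hfst hsnd)
  -- Two distinct sides could only clash along a loop or a face of length at most two.
  rcases x with ⟨d, _ | _⟩ <;> rcases y with ⟨d', _ | _⟩ <;>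
    simp only [refineOpposite, refineTail, SimpleGraph.Dart.symm_toProd, Prod.fst_swap,
      facePerm_symm_snd, faceNext_facePerm_symm, face_faceNext, Sum.inl.injEq,
      Sum.inr.injEq, Prod.mk.injEq, reduceCtorEq, and_true] at htail hhead ⊢ <;> grind

theorem refineTurn_sameCycle_of_refineTail_eq [Finite V] {x y : R.G.Dart × TriangleSide}
    (hxy : R.refineTail x = R.refineTail y) : R.refineTurn.SameCycle x y := by
  obtain ⟨d, hx⟩ := R.exists_refineTurn_sameCycle x
  obtain ⟨d', hy⟩ := R.exists_refineTurn_sameCycle y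
  have tail_eq {z} {z'} (hz : R.refineTurn.SameCycle z z') : R.refineTail z = R.refineTail z' :=
    apply_eq_of_sameCycle R.refineTail_refineTurn hz
  rcases hx with hx | hx | hx <;> rcases hy with hy | hy | hy <;>
    rw [tail_eq hx, tail_eq hy] at hxy <;>
    simp only [refineTail, Sum.inl.injEq, Sum.inr.injEq, reduceCtorEq] at hxy
  · exact (hx.trans (R.refineTurn_sameCycle_edge₀ hxy)).trans hy.symm
  · exact hx.trans (hxy ▸ hy.symm)
  · exact (hx.trans (R.refineTurn_sameCycle_center₂ hxy)).trans hy.symm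

/-- The refinement of a rotation system without faces of length at most two: every face is
triangulated by a ring of new vertices, one alongside each dart, and a central vertex. -/
noncomputable def refinement [Finite V] (h : ∀ d, R.faceNext (R.faceNext d) ≠ d) :
    CombinatorialMap (R.G.Dart × TriangleSide) (V ⊕ R.G.Dart ⊕ R.Face) where
  next := R.refineNext
  rev := R.refineOpposite_involutive.toPerm
  tail := R.refineTail
  rev_rev := R.refineOpposite_involutive
  tail_next := R.refineTail_refineNext
  sameCycle_of_tail_eq _ _ := R.refineTurn_sameCycle_of_refineTail_eq
  tail_rev_ne := R.refineTail_refineOpposite_ne (R.faceNext_ne_of_faceNext_faceNext_ne h)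
  ext_tail _ _ := R.refine_ext h

section Refinement

variable {R} [Finite V] {h : ∀ d, R.faceNext (R.faceNext d) ≠ d}

variable (h) in
theorem refinement_triangulated : (R.refinement h).toRotationSystem.Triangulated :=
  CombinatorialMap.triangulated _ fun x => Prod.ext rfl x.2.next_next_next

variable (h) in
/-- The inclusion of a rotation system into its refinement. -/
noncomputable def toRefinement : R.G →g (R.refinement h).graph where
  toFun := Sum.inl
  map_rel' {u v} huv := (R.refinement h).graph_adj_tail (⟨(u, v), huv⟩, edge₀)

theorem refinement_connected (hconn : R.G.Connected) : (R.refinement h).graph.Connected := by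
  have adj := (R.refinement h).graph_adj_tail
  have hmid (d : R.G.Dart) : ∃ v, (R.refinement h).graph.Reachable (.inr (.inl d)) (.inl v) :=
    ⟨d.snd, (adj (d, corner₀)).reachable⟩
  have hold : ∀ w, ∃ v, (R.refinement h).graph.Reachable w (.inl v)
    | .inl v => ⟨v, .rfl⟩
    | .inr (.inl d) => hmid d
    | .inr (.inr f) => by
      obtain ⟨d, rfl⟩ := R.face_surjective f
      obtain ⟨v, hv⟩ := hmid (R.faceNext d)
      have hface := (adj (d, center₁)).symm.reachable
      exact ⟨v, .trans (R.face_faceNext d ▸ hface) hv⟩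
  have : Nonempty V := hconn.nonempty
  refine .mk fun w w' => ?_
  obtain ⟨v, hv⟩ := hold w
  obtain ⟨v', hv'⟩ := hold w'
  exact hv.trans (((hconn v v').map (toRefinement h)).trans hv'.symm)

theorem subgraphVia_refinement : SubgraphVia R.G (R.refinement h).graph Sum.inl :=
  ⟨Sum.inl_injective, fun _ _ huv => (toRefinement h).map_adj huv⟩

theorem wbwDist_refinement_le (x y : V) :
    wbwDist (R.refinement h).toRotationSystem (.inl x) (.inl y) ≤ 4 * wbwDist R x y := by
  refine (wbwDist_map_le (S := (R.refinement h).toRotationSystem) (k := 3) (toRefinement h)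
    (fun d => ?_) x y).trans_eq (by norm_num)
  exact (R.refinement h).medial_edist_turn_pow_le (d, edge₀) 3

theorem exists_wbwDist_refinement_le [Nontrivial V] (hconn : R.G.Connected)
    (w : V ⊕ R.G.Dart ⊕ R.Face) :
    ∃ v, wbwDist (R.refinement h).toRotationSystem w (.inl v) ≤ 4 := by
  have turn_le := (R.refinement h).wbwDist_tail_rev_le
  rcases w with v | d | f
  · obtain ⟨u, hu⟩ := hconn.preconnected.exists_adj_of_nontrivial v
    exact ⟨v, (turn_le (⟨(u, v), hu.symm⟩, edge₀) 0).trans (by norm_num)⟩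
  · obtain ⟨d, rfl⟩ := R.faceNext_bijective.surjective d
    exact ⟨(R.faceNext d).snd, (turn_le (d, corner₁) 1).trans (by norm_num)⟩
  · obtain ⟨d, rfl⟩ := R.face_surjective f
    rw [← R.face_faceNext]
    exact ⟨(R.faceNext d).snd, (turn_le (d, center₁) 2).trans (by norm_num)⟩

theorem card_lt_card_refinement [Nontrivial V] (hconn : R.G.Connected) :
    Nat.card V < Nat.card (V ⊕ R.G.Dart ⊕ R.Face) := by
  obtain ⟨u⟩ := hconn.nonempty
  obtain ⟨v, hv⟩ := hconn.preconnected.exists_adj_of_nontrivial u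
  have : Nonempty R.G.Dart := ⟨⟨(u, v), hv⟩⟩
  rw [Nat.card_sum, Nat.card_sum]
  have := Nat.card_pos (α := R.G.Dart)
  omega

theorem refinement_isPlane [Nontrivial V] (hplane : R.IsPlane) (hconn : R.G.Connected) :
    (R.refinement h).toRotationSystem.IsPlane := by
  have euler := (isPlane_iff_of_connected hconn).1 hplane
  have hdart := R.card_dart_eq_two_mul_card_edgeSet
  have : Nontrivial (V ⊕ R.G.Dart ⊕ R.Face) := Sum.inl_injective.nontrivial
  rw [(refinement_triangulated h).isPlane_iff (refinement_connected hconn),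
    ← Nat.card_congr (R.refinement h).dart, Nat.card_prod, TriangleSide.card, Nat.card_sum,
    Nat.card_sum]
  change Nat.card V + Nat.card R.Face = _ at euler
  omega

end Refinement

end RotationSystem

end WBW

/-- Lemma 2: every simple connected plane graph `H` is a subgraph, via
an injection `τ`, of a 3-connected triangulated simple plane graph `H_Δ` such that
`wbw_{H_Δ}(τ x, τ y) ≤ 4 · wbw_H(x, y)`, every vertex of `H_Δ` is within
wall-by-wall distance at most 4 from `τ(V(H))`, and `H^λ ⊆ H_Δ^{4λ}` for every `λ`. -/
theorem exists_triangulated_supergraph (V : Type) [Finite V]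
    (R : WBW.RotationSystem V) (hplane : R.IsPlane) (hconn : R.G.Connected) :
    ∃ (W : Type) (_ : Finite W) (S : WBW.RotationSystem W) (τ : V → W),
      S.IsPlane ∧
      (WBW.ThreeConnected S.G ∧ S.Triangulated) ∧
      WBW.SubgraphVia R.G S.G τ ∧
      (∀ x y : V, WBW.wbwDist S (τ x) (τ y) ≤ 4 * WBW.wbwDist R x y) ∧
      (∀ w : W, ∃ v : V, WBW.wbwDist S w (τ v) ≤ 4) ∧
      (∀ l : ℕ, WBW.SubgraphVia (R.power l) (S.power (4 * l)) τ) := by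
  obtain hcard | hcard := lt_or_ge (Nat.card V) 3
  · obtain ⟨F, _, S, hF, htop, hS, ht⟩ := WBW.exists_triangulated_eq_top
    obtain ⟨τ⟩ : Nonempty (V ↪ F) := WBW.nonempty_embedding_of_card_le (by omega)
    have : Nontrivial F := Finite.one_lt_card_iff_nontrivial.1 (by omega)
    have hsub : WBW.SubgraphVia R.G S.G τ :=
      ⟨τ.injective, fun x y hxy => htop ▸ τ.injective.ne hxy.ne⟩
    have hone := WBW.wbwDist_le_one_of_eq_top htop
    have hdist (x y) : WBW.wbwDist S (τ x) (τ y) ≤ 4 * WBW.wbwDist R x y :=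
      (hone _ _).trans (one_le_mul (by norm_num) WBW.one_le_wbwDist)
    obtain ⟨v⟩ := hconn.nonempty
    exact ⟨F, inferInstance, S, τ, hS, ht, hsub, hdist,
      fun w => ⟨v, (hone w (τ v)).trans (by norm_num)⟩, hsub.power hdist⟩
  · have : Nontrivial V := Finite.one_lt_card_iff_nontrivial.1 (by omega)
    have h := WBW.RotationSystem.faceNext_faceNext_ne hconn hcard
    have ht := WBW.RotationSystem.refinement_triangulated h
    have hconn' := WBW.RotationSystem.refinement_connected (h := h) hconn
    have hlarge := hcard.trans_lt (WBW.RotationSystem.card_lt_card_refinement hconn)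
    have hsub := WBW.RotationSystem.subgraphVia_refinement (h := h)
    have hdist := WBW.RotationSystem.wbwDist_refinement_le (h := h)
    exact ⟨_, inferInstance, (R.refinement h).toRotationSystem, Sum.inl,
      WBW.RotationSystem.refinement_isPlane hplane hconn,
      ⟨ht.threeConnected hconn'.preconnected hlarge, ht⟩, hsub, hdist,
      WBW.RotationSystem.exists_wbwDist_refinement_le hconn, hsub.power hdist⟩
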